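/- Let D be an S-parking set of the finite sets A_1,…,A_k and let e ∈ A_i ∩ ⋁_{1 ≤ j ≤ k} A_j for some i with 1 ≤ i ≤ k. If e ∉ D, then D is an S-parking set of the sets A_1,…,A_{i−1}, A_i \ {e}, A_{i+1},…,A_k. -/

import Mathlib

/-- `⋁_{i ∈ I} A i`: the (finite) set of elements belonging to exactly one of the
sets `A i` with `i ∈ I`. -/
def onlyOne {α : Type*} [DecidableEq α] {k : ℕ} (A : Fin k → Finset α)
    (I : Finset (Fin k)) : Finset α :=
  (I.biUnion A).filter fun e => (I.filter fun i => e ∈ A i).card = 1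

/-- `D` is an S-parking set of the sets `A 0, …, A (k-1)`. -/
def IsSParkingSet {α : Type*} [DecidableEq α] {k : ℕ} (A : Fin k → Finset α)
    (D : Finset α) : Prop :=
  D.card = k ∧ ∀ I : Finset (Fin k), I.Nonempty → (D ∩ onlyOne A I).Nonempty

/-!
Membership of an element in `⋁_{j ∈ I} A j` depends only on which of the sets `A j` contain it.
Whether `D` is an S-parking set is therefore decided by the traces `D ∩ A j`, and deleting an
element outside `D` from one of the sets changes none of these traces.
-/

section

variable {α : Type*} [DecidableEq α] {k : ℕ} {A B : Fin k → Finset α} {D : Finset α}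

theorem mem_onlyOne {I : Finset (Fin k)} {x : α} :
    x ∈ onlyOne A I ↔ ∃! i, i ∈ I ∧ x ∈ A i := by
  simp only [onlyOne, Finset.mem_filter, Finset.mem_biUnion, Finset.card_eq_one_iff_existsUnique]
  exact and_iff_right_of_imp ExistsUnique.exists

theorem inter_onlyOne (A : Fin k → Finset α) (D : Finset α) (I : Finset (Fin k)) :
    D ∩ onlyOne A I = onlyOne (fun j => D ∩ A j) I := by
  ext x
  by_cases hx : x ∈ D <;> simp [mem_onlyOne, hx]

theorem isSParkingSet_congr (h : ∀ j, D ∩ A j = D ∩ B j) :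
    IsSParkingSet A D ↔ IsSParkingSet B D := by
  simp only [IsSParkingSet, inter_onlyOne, h]

end

theorem inter_update_sdiff_singleton {ι α : Type*} [DecidableEq ι] [DecidableEq α]
    (A : ι → Finset α) {D : Finset α} {e : α} (he : e ∉ D) (i j : ι) :
    D ∩ Function.update A i (A i \ {e}) j = D ∩ A j := by
  obtain rfl | hj := eq_or_ne j i
  · rw [Function.update_self, ← Finset.inter_sdiff_assoc, Finset.sdiff_singleton_eq_erase,
      Finset.erase_eq_of_notMem fun h => he (Finset.mem_of_mem_inter_left h)]
  · rw [Function.update_of_ne hj]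

theorem sparking_set_delete_elem_general {α : Type*} [DecidableEq α] {k : ℕ}
    (A : Fin k → Finset α) (D : Finset α) (hD : IsSParkingSet A D)
    (i : Fin k) (e : α) (heD : e ∉ D) :
    IsSParkingSet (Function.update A i (A i \ {e})) D :=
  (isSParkingSet_congr (inter_update_sdiff_singleton A heD i)).mpr hD

theorem sparking_set_delete_elem {α : Type*} [DecidableEq α] {k : ℕ}
    (A : Fin k → Finset α) (D : Finset α) (hD : IsSParkingSet A D)
    (i : Fin k) (e : α) (he : e ∈ A i ∩ onlyOne A Finset.univ) (heD : e ∉ D) :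
    IsSParkingSet (Function.update A i (A i \ {e})) D :=
  sparking_set_delete_elem_general A D hD i e heD
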